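/- Let a = (a_0, a_1), b = (b_0, b_1), c = (c_0, c_1), d = (d_0, d_1) be vectors in ℂ² with c and d linearly independent, let x_0, x_1, y_0, y_1 be nonzero complex numbers, and let n ≥ 3. If x_0·(a_0^{n−k} a_1^k) + x_1·(b_0^{n−k} b_1^k) = y_0·(c_0^{n−k} c_1^k) + y_1·(d_0^{n−k} d_1^k) for all 0 ≤ k ≤ n, then there exist ω_0, ω_1 ∈ ℂ such that either (a = ω_0 c, b = ω_1 d, x_0 ω_0^n = y_0, and x_1 ω_1^n = y_1) or (a = ω_0 d, b = ω_1 c, x_0 ω_0^n = y_1, and x_1 ω_1^n = y_0). -/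

import Mathlib

/-!
Expand everything in the basis `c, d`. The hypothesis says that the linear functional
`x₀ ev_a + x₁ ev_b - y₀ ev_c - y₁ ev_d` kills the monomials of degree `n` in two variables, hence
all products of `n` linear forms (`moments_linear_change`). Taking the forms dual to `c, d`, one may
assume `c = (1, 0)` and `d = (0, 1)`. Writing `a = (p, q)` and `b = (r, s)`, the entries of index
`1` and `2` on the right then both vanish because `n ≥ 3`, which forces `p q (p s - q r) = 0`. If
`p s = q r` with `q ≠ 0`, the entries of index `0` and `1` are proportional on the left, so
`y₀ = 0`, which is excluded; the cases `p = 0` and `q = 0` are the two alternatives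
(`eq_of_moments_basis`).
-/

/-- If a weighted sum of point evaluations kills all degree-`n` monomials in two variables, then it
kills all `f ^ (n - k) * g ^ k` for linear forms `f, g`. The weights vary in the induction, since
one linear factor at a time is absorbed into them. -/
lemma moments_linear_change {ι : Type*} [Fintype ι] (α β : ι → ℂ) (u v u' v' : ℂ) (n : ℕ) :
    ∀ w : ι → ℂ, (∀ k ≤ n, ∑ i, w i * (α i ^ (n - k) * β i ^ k) = 0) →
      ∀ k ≤ n, ∑ i, w i * ((u * α i + v * β i) ^ (n - k) * (u' * α i + v' * β i) ^ k) = 0 := by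
  induction n with
  | zero =>
    intro w h k hk
    obtain rfl : k = 0 := by omega
    simpa using h 0 le_rfl
  | succ n ih =>
    intro w h k hk
    have absorb (s t : ℂ) : ∀ k ≤ n,
        ∑ i, (w i * (s * α i + t * β i)) * (α i ^ (n - k) * β i ^ k) = 0 := by
      intro k hk
      have h0 := h k (by omega)
      have h1 := h (k + 1) (by omega)
      rw [show n + 1 - k = n - k + 1 by omega] at h0
      rw [show n + 1 - (k + 1) = n - k by omega] at h1
      calc _ = s * ∑ i, w i * (α i ^ (n - k + 1) * β i ^ k)
            + t * ∑ i, w i * (α i ^ (n - k) * β i ^ (k + 1)) := by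
              rw [Finset.mul_sum, Finset.mul_sum, ← Finset.sum_add_distrib]
              exact Finset.sum_congr rfl fun i _ => by ring
        _ = 0 := by rw [h0, h1]; ring
    rcases Nat.lt_or_ge n k with hnk | hkn
    · obtain rfl : k = n + 1 := by omega
      rw [← ih _ (absorb u' v') n le_rfl]
      refine Finset.sum_congr rfl fun i _ => ?_
      simp only [Nat.sub_self]
      ring
    · rw [← ih _ (absorb u v) k hkn]
      refine Finset.sum_congr rfl fun i _ => ?_
      rw [show n + 1 - k = n - k + 1 by omega]
      ring

/-- The theorem in coordinates where `c = (1, 0)` and `d = (0, 1)`. Only the entries of index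
`0`, `1`, `2` and `n` are needed. -/
lemma eq_of_moments_basis (m : ℕ) (p q r s x₀ x₁ y₀ y₁ : ℂ)
    (hx₀ : x₀ ≠ 0) (hx₁ : x₁ ≠ 0) (hy₀ : y₀ ≠ 0) (hy₁ : y₁ ≠ 0)
    (h0 : x₀ * p ^ (m + 3) + x₁ * r ^ (m + 3) = y₀)
    (h1 : x₀ * (p ^ (m + 2) * q) + x₁ * (r ^ (m + 2) * s) = 0)
    (h2 : x₀ * (p ^ (m + 1) * q ^ 2) + x₁ * (r ^ (m + 1) * s ^ 2) = 0)
    (hn : x₀ * q ^ (m + 3) + x₁ * s ^ (m + 3) = y₁) :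
    (q = 0 ∧ r = 0 ∧ x₀ * p ^ (m + 3) = y₀ ∧ x₁ * s ^ (m + 3) = y₁) ∨
      (p = 0 ∧ s = 0 ∧ x₀ * q ^ (m + 3) = y₁ ∧ x₁ * r ^ (m + 3) = y₀) := by
  by_cases hq : q = 0
  · subst hq
    have hn' : x₁ * s ^ (m + 3) = y₁ := by simpa using hn
    have hs : s ≠ 0 := by
      rintro rfl
      exact hy₁ (by simpa using hn'.symm)
    have hr : r = 0 := by simpa [hx₁, hs] using h2
    subst hr
    exact Or.inl ⟨rfl, rfl, by simpa using h0, hn'⟩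
  by_cases hp : p = 0
  · subst hp
    have h0' : x₁ * r ^ (m + 3) = y₀ := by simpa using h0
    have hr : r ≠ 0 := by
      rintro rfl
      exact hy₀ (by simpa using h0'.symm)
    have hs : s = 0 := by simpa [hx₁, hr] using h1
    subst hs
    exact Or.inr ⟨rfl, rfl, by simpa using hn, h0'⟩
  exfalso
  have key : x₀ * p ^ (m + 1) * q * (p * s - q * r) = 0 := by
    linear_combination s * h1 - r * h2
  have hdet : p * s - q * r = 0 := by simpa [hx₀, hp, hq] using key
  have : y₀ * q = 0 := by
    linear_combination (-q) * h0 + p * h1 - x₁ * r ^ (m + 2) * hdet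
  simp [hy₀, hq] at this

/-- **Uniqueness of the decomposition into a weighted sum of two tensor powers.**
Let `a, b, c, d ∈ ℂ²` with `c, d` linearly independent, let `x₀, x₁, y₀, y₁` be nonzero
scalars and `n ≥ 3`. If
`x₀ a₀^(n-k) a₁^k + x₁ b₀^(n-k) b₁^k = y₀ c₀^(n-k) c₁^k + y₁ d₀^(n-k) d₁^k` for all
`k ≤ n`, then there exist `ω₀, ω₁` such that either `a = ω₀ • c`, `b = ω₁ • d`,
`x₀ ω₀^n = y₀`, `x₁ ω₁^n = y₁`, or `a = ω₀ • d`, `b = ω₁ • c`, `x₀ ω₀^n = y₁`,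
`x₁ ω₁^n = y₀`. -/
theorem stmt_5 (n : ℕ) (hn : 3 ≤ n) (a₀ a₁ b₀ b₁ c₀ c₁ d₀ d₁ : ℂ)
    (hcd : LinearIndependent ℂ ![(c₀, c₁), (d₀, d₁)])
    (x₀ x₁ y₀ y₁ : ℂ) (hx₀ : x₀ ≠ 0) (hx₁ : x₁ ≠ 0) (hy₀ : y₀ ≠ 0) (hy₁ : y₁ ≠ 0)
    (h : ∀ k ≤ n, x₀ * (a₀ ^ (n - k) * a₁ ^ k) + x₁ * (b₀ ^ (n - k) * b₁ ^ k)
        = y₀ * (c₀ ^ (n - k) * c₁ ^ k) + y₁ * (d₀ ^ (n - k) * d₁ ^ k)) :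
    ∃ ω₀ ω₁ : ℂ,
      (((a₀, a₁) = ω₀ • (c₀, c₁) ∧ (b₀, b₁) = ω₁ • (d₀, d₁) ∧
          x₀ * ω₀ ^ n = y₀ ∧ x₁ * ω₁ ^ n = y₁) ∨
        ((a₀, a₁) = ω₀ • (d₀, d₁) ∧ (b₀, b₁) = ω₁ • (c₀, c₁) ∧
          x₀ * ω₀ ^ n = y₁ ∧ x₁ * ω₁ ^ n = y₀)) := by
  obtain ⟨m, rfl⟩ : ∃ m, n = m + 3 := ⟨n - 3, by omega⟩
  have hD : c₀ * d₁ - c₁ * d₀ ≠ 0 := by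
    intro hD
    rw [LinearIndependent.pair_iff] at hcd
    have e1 := hcd d₀ (-c₀) (by
      ext
      · simp; ring
      · simp; linear_combination -hD)
    have e2 := hcd d₁ (-c₁) (by
      ext
      · simp; linear_combination hD
      · simp; ring)
    have hd := hcd 0 1 (by
      ext
      · simp [e1.1]
      · simp [e2.1])
    exact one_ne_zero hd.2
  set D := c₀ * d₁ - c₁ * d₀ with hDdef
  -- The linear forms dual to `c, d` are `(d₁, -d₀) / D` and `(-c₁, c₀) / D`.
  have T := moments_linear_change ![a₀, b₀, c₀, d₀] ![a₁, b₁, c₁, d₁]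
    (d₁ / D) (-d₀ / D) (-c₁ / D) (c₀ / D) (m + 3) ![x₀, x₁, -y₀, -y₁] (by
      intro k hk
      simp [Fin.sum_univ_four]
      linear_combination h k hk)
  have ec0 : d₁ / D * c₀ + -d₀ / D * c₁ = 1 := by field_simp; rw [hDdef]; ring
  have ec1 : -c₁ / D * c₀ + c₀ / D * c₁ = 0 := by ring
  have ed0 : d₁ / D * d₀ + -d₀ / D * d₁ = 0 := by ring
  have ed1 : -c₁ / D * d₀ + c₀ / D * d₁ = 1 := by field_simp; rw [hDdef]; ring
  have expand (z₀ z₁ : ℂ) :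
      z₀ = (d₁ / D * z₀ + -d₀ / D * z₁) * c₀ + (-c₁ / D * z₀ + c₀ / D * z₁) * d₀ ∧
      z₁ = (d₁ / D * z₀ + -d₀ / D * z₁) * c₁ + (-c₁ / D * z₀ + c₀ / D * z₁) * d₁ := by
    constructor <;> (field_simp; rw [hDdef]; ring)
  obtain ⟨ea0, ea1⟩ := expand a₀ a₁
  obtain ⟨eb0, eb1⟩ := expand b₀ b₁
  simp only [Fin.sum_univ_four, Matrix.cons_val, ec0, ec1, ed0, ed1] at T
  generalize d₁ / D * a₀ + -d₀ / D * a₁ = p at *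
  generalize -c₁ / D * a₀ + c₀ / D * a₁ = q at *
  generalize d₁ / D * b₀ + -d₀ / D * b₁ = r at *
  generalize -c₁ / D * b₀ + c₀ / D * b₁ = s at *
  have t0 := T 0 (by omega)
  have t1 := T 1 (by omega)
  have t2 := T 2 (by omega)
  have tn := T (m + 3) le_rfl
  rw [show m + 3 - 1 = m + 2 by omega] at t1
  rw [show m + 3 - 2 = m + 1 by omega] at t2
  simp at t0 t1 t2 tn
  rcases eq_of_moments_basis m p q r s x₀ x₁ y₀ y₁ hx₀ hx₁ hy₀ hy₁ (by linear_combination t0)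
    t1 t2 (by linear_combination tn) with ⟨rfl, rfl, h3, h4⟩ | ⟨rfl, rfl, h3, h4⟩
  · refine ⟨p, s, Or.inl ⟨?_, ?_, h3, h4⟩⟩
    · ext
      · simpa using ea0
      · simpa using ea1
    · ext
      · simpa using eb0
      · simpa using eb1
  · refine ⟨q, r, Or.inr ⟨?_, ?_, h3, h4⟩⟩
    · ext
      · simpa using ea0
      · simpa using ea1
    · ext
      · simpa using eb0
      · simpa using eb1
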